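/- arXiv:2001.06027 — 5 statements merged into one kernel-verified Lean document; each statement's English description precedes it below -/
import Mathlib

section
/- For every nuisance tuple N' = (g'_a, g'_a⋆, q'_a, q'_a⋆, Qbar'_a, Qbar'_a⋆), the total effect decomposes exactly into the interventional direct, indirect, and covariant mediator effects: Ψ(N') = Ψ_A(N') + Ψ_{M1}(N') + Ψ_{M2}(N') + Ψ_{M1,M2}(N'). -/
open MeasureTheory

noncomputable section

/-- A nuisance tuple `(g_a, g_a⋆, q_a, q_a⋆, Qbar_a, Qbar_a⋆)`: propensity scores,
joint mediator densities, and outcome regressions. -/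
structure Nuisance (C M1 M2 : Type*) [MeasurableSpace C] [MeasurableSpace M1]
    [MeasurableSpace M2] (μ1 : Measure M1) (μ2 : Measure M2) where
  ga : C → ℝ
  gas : C → ℝ
  qa : M1 → M2 → C → ℝ
  qas : M1 → M2 → C → ℝ
  Qa : M1 → M2 → C → ℝ
  Qas : M1 → M2 → C → ℝ
  meas_ga : Measurable ga
  meas_gas : Measurable gas
  meas_qa : Measurable (fun x : M1 × M2 × C => qa x.1 x.2.1 x.2.2)
  meas_qas : Measurable (fun x : M1 × M2 × C => qas x.1 x.2.1 x.2.2)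
  meas_Qa : Measurable (fun x : M1 × M2 × C => Qa x.1 x.2.1 x.2.2)
  meas_Qas : Measurable (fun x : M1 × M2 × C => Qas x.1 x.2.1 x.2.2)
  ga_pos : ∀ c, 0 < ga c
  ga_lt_one : ∀ c, ga c < 1
  gas_pos : ∀ c, 0 < gas c
  gas_lt_one : ∀ c, gas c < 1
  g_sum : ∀ c, ga c + gas c = 1
  qa_pos : ∀ m1 m2 c, 0 < qa m1 m2 c
  qas_pos : ∀ m1 m2 c, 0 < qas m1 m2 c
  qa_norm : ∀ c, (∫ m1, (∫ m2, qa m1 m2 c ∂μ2) ∂μ1) = 1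
  qas_norm : ∀ c, (∫ m1, (∫ m2, qas m1 m2 c ∂μ2) ∂μ1) = 1
  Qa_nonneg : ∀ m1 m2 c, 0 ≤ Qa m1 m2 c
  Qa_le_one : ∀ m1 m2 c, Qa m1 m2 c ≤ 1
  Qas_nonneg : ∀ m1 m2 c, 0 ≤ Qas m1 m2 c
  Qas_le_one : ∀ m1 m2 c, Qas m1 m2 c ≤ 1

variable {C M1 M2 : Type*} [MeasurableSpace C] [MeasurableSpace M1] [MeasurableSpace M2]
  {μ1 : Measure M1} {μ2 : Measure M2}

/-- Marginal mediator density `q_{a,M1}`. -/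
def qaM1 (N : Nuisance C M1 M2 μ1 μ2) (m1 : M1) (c : C) : ℝ := ∫ m2, N.qa m1 m2 c ∂μ2

/-- Marginal mediator density `q_{a⋆,M1}`. -/
def qasM1 (N : Nuisance C M1 M2 μ1 μ2) (m1 : M1) (c : C) : ℝ := ∫ m2, N.qas m1 m2 c ∂μ2

/-- Marginal mediator density `q_{a,M2}`. -/
def qaM2 (N : Nuisance C M1 M2 μ1 μ2) (m2 : M2) (c : C) : ℝ := ∫ m1, N.qa m1 m2 c ∂μ1

/-- Marginal mediator density `q_{a⋆,M2}`. -/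
def qasM2 (N : Nuisance C M1 M2 μ1 μ2) (m2 : M2) (c : C) : ℝ := ∫ m1, N.qas m1 m2 c ∂μ1

/-- Total effect `Ψ`. -/
def Psi (μC : Measure C) (N : Nuisance C M1 M2 μ1 μ2) : ℝ :=
  ∫ c, (∫ m1, (∫ m2,
    (N.Qa m1 m2 c * N.qa m1 m2 c - N.Qas m1 m2 c * N.qas m1 m2 c) ∂μ2) ∂μ1) ∂μC

/-- Interventional direct effect `Ψ_A`. -/
def PsiA (μC : Measure C) (N : Nuisance C M1 M2 μ1 μ2) : ℝ :=
  ∫ c, (∫ m1, (∫ m2,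
    ((N.Qa m1 m2 c - N.Qas m1 m2 c) * N.qas m1 m2 c) ∂μ2) ∂μ1) ∂μC

/-- Interventional indirect effect through `M1`. -/
def PsiM1 (μC : Measure C) (N : Nuisance C M1 M2 μ1 μ2) : ℝ :=
  ∫ c, (∫ m1, (∫ m2,
    (N.Qa m1 m2 c * ((qaM1 N m1 c - qasM1 N m1 c) * qasM2 N m2 c)) ∂μ2) ∂μ1) ∂μC

/-- Interventional indirect effect through `M2`. -/
def PsiM2 (μC : Measure C) (N : Nuisance C M1 M2 μ1 μ2) : ℝ :=
  ∫ c, (∫ m1, (∫ m2,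
    (N.Qa m1 m2 c * (qaM1 N m1 c * (qaM2 N m2 c - qasM2 N m2 c))) ∂μ2) ∂μ1) ∂μC

/-- Covariant mediator effect `Ψ_{M1,M2}`. -/
def PsiCov (μC : Measure C) (N : Nuisance C M1 M2 μ1 μ2) : ℝ :=
  ∫ c, (∫ m1, (∫ m2,
    (N.Qa m1 m2 c * (N.qa m1 m2 c - qaM1 N m1 c * qaM2 N m2 c
      - (N.qas m1 m2 c - qasM1 N m1 c * qasM2 N m2 c))) ∂μ2) ∂μ1) ∂μC

/-- `E_P[D]` for a function `D(a0, m1, m2, c, y)` affine in `y`: the mean of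
`D(A, M1, M2, C, Y)` under the observed-data law generated by the tuple `N`
(`a0 = true` encodes `a`, `a0 = false` encodes `a⋆`). -/
def EP (μC : Measure C) (N : Nuisance C M1 M2 μ1 μ2)
    (D : Bool → M1 → M2 → C → ℝ → ℝ) : ℝ :=
  ∫ c,
    (N.ga c * (∫ m1, (∫ m2, N.qa m1 m2 c * D true m1 m2 c (N.Qa m1 m2 c) ∂μ2) ∂μ1)
      + N.gas c * (∫ m1, (∫ m2, N.qas m1 m2 c * D false m1 m2 c (N.Qas m1 m2 c) ∂μ2) ∂μ1)) ∂μC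

/-- `Q̃_a(c) = ∬ Qbar_a q_a`. -/
def QtA (N : Nuisance C M1 M2 μ1 μ2) (c : C) : ℝ :=
  ∫ m1, (∫ m2, N.Qa m1 m2 c * N.qa m1 m2 c ∂μ2) ∂μ1

/-- `Q̃_a⋆(c) = ∬ Qbar_a⋆ q_a⋆` (this is also `Q̃_{a⋆,⋆}`). -/
def QtAs (N : Nuisance C M1 M2 μ1 μ2) (c : C) : ℝ :=
  ∫ m1, (∫ m2, N.Qas m1 m2 c * N.qas m1 m2 c ∂μ2) ∂μ1

/-- `Q̃_{a,⋆}(c) = ∬ Qbar_a q_a⋆`. -/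
def QtAstar (N : Nuisance C M1 M2 μ1 μ2) (c : C) : ℝ :=
  ∫ m1, (∫ m2, N.Qa m1 m2 c * N.qas m1 m2 c ∂μ2) ∂μ1

/-- `Q̃_{a,M2⋆}(m1,c) = ∫ Qbar_a q_{a⋆,M2} dμ2`. -/
def QtM2s (N : Nuisance C M1 M2 μ1 μ2) (m1 : M1) (c : C) : ℝ :=
  ∫ m2, N.Qa m1 m2 c * qasM2 N m2 c ∂μ2

/-- `Q̃_{a,M2}(m1,c) = ∫ Qbar_a q_{a,M2} dμ2`. -/
def QtM2 (N : Nuisance C M1 M2 μ1 μ2) (m1 : M1) (c : C) : ℝ :=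
  ∫ m2, N.Qa m1 m2 c * qaM2 N m2 c ∂μ2

/-- `Q̃_{a,M1}(m2,c) = ∫ Qbar_a q_{a,M1} dμ1`. -/
def QtM1 (N : Nuisance C M1 M2 μ1 μ2) (m2 : M2) (c : C) : ℝ :=
  ∫ m1, N.Qa m1 m2 c * qaM1 N m1 c ∂μ1

/-- `Q̃_{a,M1⋆}(m2,c) = ∫ Qbar_a q_{a⋆,M1} dμ1`. -/
def QtM1s (N : Nuisance C M1 M2 μ1 μ2) (m2 : M2) (c : C) : ℝ :=
  ∫ m1, N.Qa m1 m2 c * qasM1 N m1 c ∂μ1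

/-- `Q̃_{a,M1×M2⋆}(c)`. -/
def QtM1xM2s (N : Nuisance C M1 M2 μ1 μ2) (c : C) : ℝ :=
  ∫ m1, (∫ m2, N.Qa m1 m2 c * (qaM1 N m1 c * qasM2 N m2 c) ∂μ2) ∂μ1

/-- `Q̃_{a,M1⋆×M2⋆}(c)`. -/
def QtM1sxM2s (N : Nuisance C M1 M2 μ1 μ2) (c : C) : ℝ :=
  ∫ m1, (∫ m2, N.Qa m1 m2 c * (qasM1 N m1 c * qasM2 N m2 c) ∂μ2) ∂μ1

/-- `Q̃_{a,M1×M2}(c)`. -/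
def QtM1xM2 (N : Nuisance C M1 M2 μ1 μ2) (c : C) : ℝ :=
  ∫ m1, (∫ m2, N.Qa m1 m2 c * (qaM1 N m1 c * qaM2 N m2 c) ∂μ2) ∂μ1

/-- Uncentered efficient influence function of the total effect. -/
def D0 (N' : Nuisance C M1 M2 μ1 μ2) : Bool → M1 → M2 → C → ℝ → ℝ :=
  fun a0 _ _ c y =>
    (if a0 then (N'.ga c)⁻¹ * (y - QtA N' c)
     else -((N'.gas c)⁻¹ * (y - QtAs N' c)))
    + (QtA N' c - QtAs N' c)

/-- Uncentered efficient influence function of the interventional direct effect. -/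
def D0A (N' : Nuisance C M1 M2 μ1 μ2) : Bool → M1 → M2 → C → ℝ → ℝ :=
  fun a0 m1 m2 c y =>
    (if a0 then
      (N'.ga c)⁻¹ * (N'.qas m1 m2 c / N'.qa m1 m2 c) * (y - N'.Qa m1 m2 c)
     else
      -((N'.gas c)⁻¹ * (y - N'.Qas m1 m2 c))
        + (N'.gas c)⁻¹ * (N'.Qa m1 m2 c - N'.Qas m1 m2 c - (QtAstar N' c - QtAs N' c)))
    + (QtAstar N' c - QtAs N' c)

/-- Uncentered efficient influence function of the interventional indirect effect
through `M1`. -/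
def D0M1 (N' : Nuisance C M1 M2 μ1 μ2) : Bool → M1 → M2 → C → ℝ → ℝ :=
  fun a0 m1 m2 c y =>
    (if a0 then
      (N'.ga c)⁻¹ * ((qaM1 N' m1 c - qasM1 N' m1 c) * qasM2 N' m2 c / N'.qa m1 m2 c)
          * (y - N'.Qa m1 m2 c)
        + (N'.ga c)⁻¹ * (QtM2s N' m1 c - QtM1xM2s N' c)
     else
      -((N'.gas c)⁻¹ * (QtM2s N' m1 c - QtM1sxM2s N' c))
        + (N'.gas c)⁻¹ * (QtM1 N' m2 c - QtM1s N' m2 c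
            - (QtM1xM2s N' c - QtM1sxM2s N' c)))
    + (QtM1xM2s N' c - QtM1sxM2s N' c)

/-- Uncentered efficient influence function of the interventional indirect effect
through `M2`. -/
def D0M2 (N' : Nuisance C M1 M2 μ1 μ2) : Bool → M1 → M2 → C → ℝ → ℝ :=
  fun a0 m1 m2 c y =>
    (if a0 then
      (N'.ga c)⁻¹ * ((qaM2 N' m2 c - qasM2 N' m2 c) * qaM1 N' m1 c / N'.qa m1 m2 c)
          * (y - N'.Qa m1 m2 c)
        + (N'.ga c)⁻¹ * (QtM1 N' m2 c - QtM1xM2 N' c)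
        + (N'.ga c)⁻¹ * (QtM2 N' m1 c - QtM2s N' m1 c
            - (QtM1xM2 N' c - QtM1xM2s N' c))
     else
      -((N'.gas c)⁻¹ * (QtM1 N' m2 c - QtM1xM2s N' c)))
    + (QtM1xM2 N' c - QtM1xM2s N' c)

/-- Uncentered efficient influence function of the covariant mediator effect. -/
def D0Cov (N' : Nuisance C M1 M2 μ1 μ2) : Bool → M1 → M2 → C → ℝ → ℝ :=
  fun a0 m1 m2 c y =>
    D0 N' a0 m1 m2 c y - D0A N' a0 m1 m2 c y - D0M1 N' a0 m1 m2 c y - D0M2 N' a0 m1 m2 c y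

/-- The iterated integral `∫_𝒞 ∬ f dμ1 dμ2 dμC` is absolutely convergent and all of its
Fubini interchanges are valid: `f` is integrable for the product measure. -/
def ProdIntegrable (μC : Measure C) (ν1 : Measure M1) (ν2 : Measure M2)
    (f : M1 → M2 → C → ℝ) : Prop :=
  Integrable (fun x : C × M1 × M2 => f x.2.1 x.2.2 x.1) (μC.prod (ν1.prod ν2))

/-- For every `c`, the iterated integral `∬ f(·,·,c) dμ1 dμ2` is absolutely convergent and
its Fubini interchange is valid. -/
def FubiniOK (ν1 : Measure M1) (ν2 : Measure M2) (f : M1 → M2 → C → ℝ) : Prop :=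
  ∀ c, Integrable (fun m : M1 × M2 => f m.1 m.2 c) (ν1.prod ν2)

/-- All iterated integrals defining `E_P[D]` are absolutely convergent with valid Fubini
interchanges. -/
def EPIntegrable (μC : Measure C) (N : Nuisance C M1 M2 μ1 μ2)
    (D : Bool → M1 → M2 → C → ℝ → ℝ) : Prop :=
  Integrable (fun x : C × M1 × M2 =>
      N.ga x.1 * (N.qa x.2.1 x.2.2 x.1 * D true x.2.1 x.2.2 x.1 (N.Qa x.2.1 x.2.2 x.1)))
    (μC.prod (μ1.prod μ2)) ∧
  Integrable (fun x : C × M1 × M2 =>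
      N.gas x.1 * (N.qas x.2.1 x.2.2 x.1 * D false x.2.1 x.2.2 x.1 (N.Qas x.2.1 x.2.2 x.1)))
    (μC.prod (μ1.prod μ2))

/-- The iterated integral of a product-integrable function is its product integral. -/
theorem iter_eq_prod (μC : Measure C) [SFinite μC] [SigmaFinite μ1] [SigmaFinite μ2]
    (f : M1 → M2 → C → ℝ) (hf : ProdIntegrable μC μ1 μ2 f) :
    (∫ c, (∫ m1, (∫ m2, f m1 m2 c ∂μ2) ∂μ1) ∂μC)
      = ∫ x : C × M1 × M2, f x.2.1 x.2.2 x.1 ∂(μC.prod (μ1.prod μ2)) := by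
  unfold ProdIntegrable at hf
  rw [integral_prod _ hf]
  apply integral_congr_ae
  filter_upwards [hf.prod_right_ae] with c hc
  exact (integral_prod _ hc).symm

theorem total_effect_decomposition
    (μC : Measure C) [IsProbabilityMeasure μC] [SigmaFinite μ1] [SigmaFinite μ2]
    (N' : Nuisance C M1 M2 μ1 μ2)
    (hPsi : ProdIntegrable μC μ1 μ2
      (fun m1 m2 c => N'.Qa m1 m2 c * N'.qa m1 m2 c - N'.Qas m1 m2 c * N'.qas m1 m2 c))
    (hPsiA : ProdIntegrable μC μ1 μ2
      (fun m1 m2 c => (N'.Qa m1 m2 c - N'.Qas m1 m2 c) * N'.qas m1 m2 c))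
    (hPsiM1 : ProdIntegrable μC μ1 μ2
      (fun m1 m2 c => N'.Qa m1 m2 c * ((qaM1 N' m1 c - qasM1 N' m1 c) * qasM2 N' m2 c)))
    (hPsiM2 : ProdIntegrable μC μ1 μ2
      (fun m1 m2 c => N'.Qa m1 m2 c * (qaM1 N' m1 c * (qaM2 N' m2 c - qasM2 N' m2 c))))
    (hPsiCov : ProdIntegrable μC μ1 μ2
      (fun m1 m2 c => N'.Qa m1 m2 c * (N'.qa m1 m2 c - qaM1 N' m1 c * qaM2 N' m2 c
        - (N'.qas m1 m2 c - qasM1 N' m1 c * qasM2 N' m2 c)))) :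
    Psi μC N' = PsiA μC N' + PsiM1 μC N' + PsiM2 μC N' + PsiCov μC N' := by
  unfold Psi PsiA PsiM1 PsiM2 PsiCov
  rw [iter_eq_prod μC _ hPsi, iter_eq_prod μC _ hPsiA, iter_eq_prod μC _ hPsiM1,
    iter_eq_prod μC _ hPsiM2, iter_eq_prod μC _ hPsiCov]
  unfold ProdIntegrable at hPsiA hPsiM1 hPsiM2 hPsiCov
  have h1 := integral_add' hPsiA hPsiM1
  have h2 := integral_add' (hPsiA.add hPsiM1) hPsiM2
  have h3 := integral_add' ((hPsiA.add hPsiM1).add hPsiM2) hPsiCov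
  rw [h2, h1] at h3
  refine Eq.trans ?_ h3
  congr 1
  funext x
  simp only [Pi.add_apply]
  ring

end
end

section
/- If Qbar'_a = Qbar_a, Qbar'_a⋆ = Qbar_a⋆, q'_a = q_a and q'_a⋆ = q_a⋆ (the working outcome regressions and joint mediator densities agree with the truth), then E_P[D0(N')] = Ψ(N), regardless of the working propensity scores g'_a, g'_a⋆; that is, the efficient-influence-function-corrected total effect recovers the true total effect. -/
open MeasureTheory

noncomputable section

variable {C M1 M2 : Type*} [MeasurableSpace C] [MeasurableSpace M1] [MeasurableSpace M2]
  {μ1 : Measure M1} {μ2 : Measure M2}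

theorem aux_iter {M1 M2 : Type*} [MeasurableSpace M1] [MeasurableSpace M2]
    {μ1 : Measure M1} {μ2 : Measure M2} [SigmaFinite μ1] [SigmaFinite μ2]
    (q Q : M1 → M2 → ℝ) (g α β : ℝ) (hg : g ≠ 0)
    (hq : (∫ m1, (∫ m2, q m1 m2 ∂μ2) ∂μ1) = 1)
    (hQ : Integrable (fun m : M1 × M2 => Q m.1 m.2 * q m.1 m.2) (μ1.prod μ2))
    (h : Integrable (fun m : M1 × M2 => g * (q m.1 m.2 * (α * Q m.1 m.2 + β)))
      (μ1.prod μ2)) :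
    (∫ m1, (∫ m2, q m1 m2 * (α * Q m1 m2 + β) ∂μ2) ∂μ1)
      = α * (∫ m1, (∫ m2, Q m1 m2 * q m1 m2 ∂μ2) ∂μ1) + β := by
  have e : ∀ m1 m2, q m1 m2 * (α * Q m1 m2 + β)
      = α * (Q m1 m2 * q m1 m2) + β * q m1 m2 := fun m1 m2 => by ring
  simp only [e] at h ⊢
  by_cases hβ : β = 0
  · subst hβ
    simp [integral_const_mul]
  · have h1 : Integrable (fun m : M1 × M2 => q m.1 m.2) (μ1.prod μ2) := by
      have h2 := ((h.const_mul g⁻¹).sub (hQ.const_mul α)).const_mul β⁻¹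
      refine h2.congr (Filter.Eventually.of_forall fun m => ?_)
      simp only [Pi.sub_apply]
      field_simp
      ring
    have h3 := integral_integral
      (f := fun m1 m2 => α * (Q m1 m2 * q m1 m2) + β * q m1 m2)
      ((hQ.const_mul α).add (h1.const_mul β))
    rw [h3, integral_add (hQ.const_mul α) (h1.const_mul β), integral_const_mul,
      integral_const_mul, ← integral_integral (f := fun m1 m2 => Q m1 m2 * q m1 m2) hQ,
      ← integral_integral (f := q) h1, hq, mul_one]

theorem total_effect_robust_outcome_mediator
    (μC : Measure C) [IsProbabilityMeasure μC] [SigmaFinite μ1] [SigmaFinite μ2]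
    (N N' : Nuisance C M1 M2 μ1 μ2)
    (hQa : N'.Qa = N.Qa)
    (hQas : N'.Qas = N.Qas)
    (hqa : N'.qa = N.qa)
    (hqas : N'.qas = N.qas)
    (hEP : EPIntegrable μC N (D0 N'))
    (hPsiN : ProdIntegrable μC μ1 μ2
      (fun m1 m2 c => N.Qa m1 m2 c * N.qa m1 m2 c - N.Qas m1 m2 c * N.qas m1 m2 c))
    (hF1 : FubiniOK μ1 μ2 (fun m1 m2 c => N'.Qa m1 m2 c * N'.qa m1 m2 c))
    (hF2 : FubiniOK μ1 μ2 (fun m1 m2 c => N'.Qas m1 m2 c * N'.qas m1 m2 c)) :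
    EP μC N (D0 N') = Psi μC N := by
  have hA : QtA N' = QtA N := by funext c; simp only [QtA, hQa, hqa]
  have hAs : QtAs N' = QtAs N := by funext c; simp only [QtAs, hQas, hqas]
  rw [hQa, hqa] at hF1
  rw [hQas, hqas] at hF2
  obtain ⟨h1, h2⟩ := hEP
  unfold EP Psi
  refine integral_congr_ae ?_
  filter_upwards [h1.prod_right_ae, h2.prod_right_ae] with c k1 k2
  have e1 : ∀ m1 m2, D0 N' true m1 m2 c (N.Qa m1 m2 c)
      = (N'.ga c)⁻¹ * N.Qa m1 m2 c
        + (-((N'.ga c)⁻¹ * QtA N c) + (QtA N c - QtAs N c)) := fun m1 m2 => by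
    simp only [D0, hA, hAs, if_true]; ring
  have e2 : ∀ m1 m2, D0 N' false m1 m2 c (N.Qas m1 m2 c)
      = (-(N'.gas c)⁻¹) * N.Qas m1 m2 c
        + ((N'.gas c)⁻¹ * QtAs N c + (QtA N c - QtAs N c)) := fun m1 m2 => by
    simp only [D0, hA, hAs, Bool.false_eq_true, if_false]; ring
  simp only [e1] at k1
  simp only [e2] at k2
  simp only [e1, e2]
  rw [aux_iter (fun m1 m2 => N.qa m1 m2 c) (fun m1 m2 => N.Qa m1 m2 c) (N.ga c) _ _
      (N.ga_pos c).ne' (N.qa_norm c) (hF1 c) k1,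
    aux_iter (fun m1 m2 => N.qas m1 m2 c) (fun m1 m2 => N.Qas m1 m2 c) (N.gas c) _ _
      (N.gas_pos c).ne' (N.qas_norm c) (hF2 c) k2,
    integral_integral (f := fun m1 m2 =>
      N.Qa m1 m2 c * N.qa m1 m2 c - N.Qas m1 m2 c * N.qas m1 m2 c) ((hF1 c).sub (hF2 c)),
    integral_sub (hF1 c) (hF2 c),
    ← integral_integral (f := fun m1 m2 => N.Qa m1 m2 c * N.qa m1 m2 c) (hF1 c),
    ← integral_integral (f := fun m1 m2 => N.Qas m1 m2 c * N.qas m1 m2 c) (hF2 c)]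
  change N.ga c * ((N'.ga c)⁻¹ * QtA N c + _) + N.gas c * (-(N'.gas c)⁻¹ * QtAs N c + _)
    = QtA N c - QtAs N c
  have hs := N.g_sum c
  linear_combination (QtA N c - QtAs N c) * hs

end
end

section
/- If Qbar'_a = Qbar_a, Qbar'_a⋆ = Qbar_a⋆ and g'_a⋆ = g_a⋆ (the working outcome regressions and the working propensity for a⋆ agree with the truth), then E_P[D0_A(N')] = Ψ_A(N), regardless of the working joint mediator densities q'_a, q'_a⋆ and of g'_a; that is, the efficient-influence-function-corrected interventional direct effect recovers the true interventional direct effect. -/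
open MeasureTheory

noncomputable section

variable {C M1 M2 : Type*} [MeasurableSpace C] [MeasurableSpace M1] [MeasurableSpace M2]
  {μ1 : Measure M1} {μ2 : Measure M2}

theorem direct_effect_robust_outcome_and_gas
    (μC : Measure C) [IsProbabilityMeasure μC] [SigmaFinite μ1] [SigmaFinite μ2]
    (N N' : Nuisance C M1 M2 μ1 μ2)
    (hQa : N'.Qa = N.Qa)
    (hQas : N'.Qas = N.Qas)
    (hgas : N'.gas = N.gas)
    (hEP : EPIntegrable μC N (D0A N'))
    (hPsiN : ProdIntegrable μC μ1 μ2
      (fun m1 m2 c => (N.Qa m1 m2 c - N.Qas m1 m2 c) * N.qas m1 m2 c))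
    (hF1 : FubiniOK μ1 μ2 (fun m1 m2 c => N'.Qa m1 m2 c * N'.qas m1 m2 c))
    (hF2 : FubiniOK μ1 μ2 (fun m1 m2 c => N'.Qas m1 m2 c * N'.qas m1 m2 c)) :
    EP μC N (D0A N') = PsiA μC N := by
  obtain ⟨-, h2⟩ := hEP
  unfold EP PsiA
  apply integral_congr_ae
  filter_upwards [h2.prod_right_ae, hPsiN.prod_right_ae] with c h2c hPc
  have hg := N.g_sum c
  have hgp : N.gas c ≠ 0 := (N.gas_pos c).ne'
  have hga : N.ga c ≠ 0 := (N.ga_pos c).ne'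
  simp only [D0A, hQa, hQas, hgas, sub_self, mul_zero, neg_zero, zero_add, if_true,
    Bool.false_eq_true, if_false] at h2c ⊢
  generalize QtAstar N' c - QtAs N' c = K at h2c ⊢
  have e1 : (∫ m1, ∫ m2, N.qa m1 m2 c * K ∂μ2 ∂μ1) = K := by
    simp only [integral_mul_const, N.qa_norm, one_mul]
  rw [e1]
  by_cases hK : K = 0
  · subst hK
    simp only [mul_zero, zero_add, add_zero, sub_zero]
    rw [← integral_const_mul]
    congr 1
    ext m1
    rw [← integral_const_mul]
    congr 1
    ext m2
    field_simp
  · have hq : Integrable (fun m : M1 × M2 => N.qas m.1 m.2 c) (μ1.prod μ2) := by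
      have h := (hPc.sub h2c).const_mul ((N.ga c * K)⁻¹)
      refine h.congr (Filter.Eventually.of_forall fun m => ?_)
      have hg' : N.ga c = 1 - N.gas c := by linarith
      have hg0 : 1 - N.gas c ≠ 0 := hg' ▸ hga
      simp only [Pi.sub_apply]
      rw [hg']
      field_simp
      ring
    have hn : ∫ m : M1 × M2, N.qas m.1 m.2 c ∂(μ1.prod μ2) = 1 := by
      rw [integral_prod _ hq]
      exact N.qas_norm c
    have e2 : (∫ m1, ∫ m2, (N.Qa m1 m2 c - N.Qas m1 m2 c) * N.qas m1 m2 c ∂μ2 ∂μ1)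
        = ∫ m : M1 × M2, (N.Qa m.1 m.2 c - N.Qas m.1 m.2 c) * N.qas m.1 m.2 c ∂(μ1.prod μ2) :=
      (integral_prod _ hPc).symm
    have e3 : N.gas c * (∫ m1, ∫ m2, N.qas m1 m2 c *
          ((N.gas c)⁻¹ * (N.Qa m1 m2 c - N.Qas m1 m2 c - K) + K) ∂μ2 ∂μ1)
        = ∫ m : M1 × M2, N.gas c * (N.qas m.1 m.2 c *
          ((N.gas c)⁻¹ * (N.Qa m.1 m.2 c - N.Qas m.1 m.2 c - K) + K)) ∂(μ1.prod μ2) := by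
      rw [integral_prod _ h2c]
      simp only [integral_const_mul]
    have e4 : (∫ m : M1 × M2, N.gas c * (N.qas m.1 m.2 c *
          ((N.gas c)⁻¹ * (N.Qa m.1 m.2 c - N.Qas m.1 m.2 c - K) + K)) ∂(μ1.prod μ2))
        = ∫ m : M1 × M2, ((N.Qa m.1 m.2 c - N.Qas m.1 m.2 c) * N.qas m.1 m.2 c
          - N.ga c * K * N.qas m.1 m.2 c) ∂(μ1.prod μ2) := by
      congr 1
      ext m
      have hg' : N.ga c = 1 - N.gas c := by linarith
      rw [hg']
      field_simp
      ring
    rw [e3, e4, e2, integral_sub hPc (hq.const_mul _), integral_const_mul, hn]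
    ring

end
end

section
/- If Qbar'_a = Qbar_a, Qbar'_a⋆ = Qbar_a⋆, q'_a = q_a and q'_a⋆ = q_a⋆ (the working outcome regressions and joint mediator densities agree with the truth), then E_P[D0_A(N')] = Ψ_A(N), regardless of the working propensity scores g'_a, g'_a⋆; that is, the efficient-influence-function-corrected interventional direct effect recovers the true interventional direct effect. -/
open MeasureTheory

noncomputable section

variable {C M1 M2 : Type*} [MeasurableSpace C] [MeasurableSpace M1] [MeasurableSpace M2]
  {μ1 : Measure M1} {μ2 : Measure M2}

theorem direct_effect_robust_outcome_mediator
    (μC : Measure C) [IsProbabilityMeasure μC] [SigmaFinite μ1] [SigmaFinite μ2]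
    (N N' : Nuisance C M1 M2 μ1 μ2)
    (hQa : N'.Qa = N.Qa)
    (hQas : N'.Qas = N.Qas)
    (hqa : N'.qa = N.qa)
    (hqas : N'.qas = N.qas)
    (hEP : EPIntegrable μC N (D0A N'))
    (hPsiN : ProdIntegrable μC μ1 μ2
      (fun m1 m2 c => (N.Qa m1 m2 c - N.Qas m1 m2 c) * N.qas m1 m2 c))
    (hF1 : FubiniOK μ1 μ2 (fun m1 m2 c => N'.Qa m1 m2 c * N'.qas m1 m2 c))
    (hF2 : FubiniOK μ1 μ2 (fun m1 m2 c => N'.Qas m1 m2 c * N'.qas m1 m2 c)) :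
    EP μC N (D0A N') = PsiA μC N := by
  have key : ∀ᵐ c ∂μC, Integrable (fun m : M1 × M2 =>
      N.gas c * (N.qas m.1 m.2 c * D0A N' false m.1 m.2 c (N.Qas m.1 m.2 c)))
      (μ1.prod μ2) := hEP.2.prod_right_ae
  unfold EP PsiA
  refine integral_congr_ae ?_
  filter_upwards [key] with c hc
  have hgas : N.gas c ≠ 0 := (N.gas_pos c).ne'
  have h3 := hc.const_mul (N.gas c)⁻¹
  have hF1c := hF1 c
  have hF2c := hF2 c
  simp only [hQa, hQas, hqas] at hF1c hF2c
  have hd : Integrable (fun m : M1 × M2 => N.Qa m.1 m.2 c * N.qas m.1 m.2 c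
      - N.Qas m.1 m.2 c * N.qas m.1 m.2 c) (μ1.prod μ2) := hF1c.sub hF2c
  -- the contrast of the outcome means
  have hΔ : (∫ m : M1 × M2, (N.Qa m.1 m.2 c * N.qas m.1 m.2 c
      - N.Qas m.1 m.2 c * N.qas m.1 m.2 c) ∂(μ1.prod μ2)) = QtAstar N' c - QtAs N' c := by
    rw [integral_sub hF1c hF2c, integral_prod _ hF1c, integral_prod _ hF2c]
    simp only [QtAstar, QtAs, hQa, hQas, hqas]
  have hPsi : (∫ m1, ∫ m2, (N.Qa m1 m2 c - N.Qas m1 m2 c) * N.qas m1 m2 c ∂μ2 ∂μ1)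
      = QtAstar N' c - QtAs N' c := by
    rw [← hΔ, integral_prod _ hd]
    simp only [sub_mul]
  rw [hPsi]
  have hT : (∫ m1, ∫ m2, N.qa m1 m2 c * D0A N' true m1 m2 c (N.Qa m1 m2 c) ∂μ2 ∂μ1)
      = QtAstar N' c - QtAs N' c := by
    have : ∀ m1 m2, N.qa m1 m2 c * D0A N' true m1 m2 c (N.Qa m1 m2 c)
        = N.qa m1 m2 c * (QtAstar N' c - QtAs N' c) := by
      intro m1 m2
      simp [D0A, hQa]
    simp only [this, integral_mul_const, N.qa_norm, one_mul]
  have hD : ∀ m1 m2, N.qas m1 m2 c * D0A N' false m1 m2 c (N.Qas m1 m2 c)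
      = (N'.gas c)⁻¹ * (N.Qa m1 m2 c * N.qas m1 m2 c - N.Qas m1 m2 c * N.qas m1 m2 c)
        + N.qas m1 m2 c * ((1 - (N'.gas c)⁻¹) * (QtAstar N' c - QtAs N' c)) := by
    intro m1 m2
    simp only [D0A, hQa, hQas, Bool.false_eq_true, if_false]
    ring
  have h4 : Integrable (fun m : M1 × M2 =>
      N.qas m.1 m.2 c * D0A N' false m.1 m.2 c (N.Qas m.1 m.2 c)) (μ1.prod μ2) := by
    refine h3.congr (Filter.Eventually.of_forall fun m => ?_)
    simp only
    rw [inv_mul_cancel_left₀ hgas]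
  have h5 := hd.const_mul (N'.gas c)⁻¹
  have h6 : Integrable (fun m : M1 × M2 =>
      N.qas m.1 m.2 c * ((1 - (N'.gas c)⁻¹) * (QtAstar N' c - QtAs N' c))) (μ1.prod μ2) := by
    refine (h4.sub h5).congr (Filter.Eventually.of_forall fun m => ?_)
    simp only [Pi.sub_apply, hD]
    ring
  have hS : (∫ m1, ∫ m2, N.qas m1 m2 c * D0A N' false m1 m2 c (N.Qas m1 m2 c) ∂μ2 ∂μ1)
      = QtAstar N' c - QtAs N' c := by
    have e1 := integral_prod _ h4
    have e2 := integral_prod _ h6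
    simp only [integral_mul_const, N.qas_norm, one_mul] at e2
    rw [← e1]
    simp only [hD]
    rw [integral_add h5 h6, integral_mul_const, e2, integral_const_mul, hΔ]
    ring
  rw [hT, hS, ← add_mul, N.g_sum, one_mul]

end
end

section
/- The t indirect-effect integrals telescope: Σ_{s=1}^t ψ_{t,M_s} = ∫_𝒞 ∫ Qbar_a(m_1,…,m_t,c) { ∏_{u=1}^t p_u(m_u,c) − ∏_{v=1}^t r_v(m_v,c) } dμ_1(m_1)⋯dμ_t(m_t) dμC(c); that is, the sum of the interventional indirect effects through M_1,…,M_t equals the contrast of the outcome regression marginalized over the product of the treatment-level-a marginal mediator densities versus the product of the treatment-level-a⋆ marginal mediator densities. -/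
open MeasureTheory

/-- **Telescoping of interventional indirect effects with `t` mediators.** The sum of the
interventional indirect effects `ψ_{t,M_s}`, `s = 1,…,t`, equals the contrast of the outcome
regression marginalized over the product of the treatment-level-`a` marginal mediator
densities `p_u` versus the product of the treatment-level-`a⋆` marginal mediator densities
`r_v`.  Mediator `u` takes values in the measurable space `M u` with σ-finite measure `μ u`;
for `s : Fin t`, the sets `Finset.Iio s` and `Finset.Ioi s` encode `{1,…,s-1}` and
`{s+1,…,t}` respectively. -/
theorem indirect_effects_telescope
    (t : ℕ) (ht : 1 ≤ t)
    {C : Type*} [MeasurableSpace C] (μC : Measure C) [IsProbabilityMeasure μC]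
    (M : Fin t → Type*) [∀ i, MeasurableSpace (M i)]
    (μ : ∀ i, Measure (M i)) [∀ i, SigmaFinite (μ i)]
    (p r : ∀ i, M i → C → ℝ) (Qb : (∀ i, M i) → C → ℝ)
    (hp_meas : ∀ i, Measurable (fun x : M i × C => p i x.1 x.2))
    (hr_meas : ∀ i, Measurable (fun x : M i × C => r i x.1 x.2))
    (hQb_meas : Measurable (fun x : (∀ i, M i) × C => Qb x.1 x.2))
    (hp_nonneg : ∀ i mi c, 0 ≤ p i mi c) (hr_nonneg : ∀ i mi c, 0 ≤ r i mi c)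
    (hp_norm : ∀ i c, (∫ mi, p i mi c ∂(μ i)) = 1)
    (hr_norm : ∀ i c, (∫ mi, r i mi c ∂(μ i)) = 1)
    (hQb_nonneg : ∀ m c, 0 ≤ Qb m c) (hQb_le_one : ∀ m c, Qb m c ≤ 1)
    (hInt : ∀ s : Fin t, Integrable (fun x : C × (∀ i, M i) =>
        Qb x.2 x.1 * ((p s (x.2 s) x.1 - r s (x.2 s) x.1)
          * ((∏ u ∈ Finset.Iio s, p u (x.2 u) x.1) * ∏ v ∈ Finset.Ioi s, r v (x.2 v) x.1)))
        (μC.prod (Measure.pi μ)))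
    (hInt' : Integrable (fun x : C × (∀ i, M i) =>
        Qb x.2 x.1 * ((∏ u, p u (x.2 u) x.1) - ∏ v, r v (x.2 v) x.1))
        (μC.prod (Measure.pi μ))) :
    (∑ s : Fin t, ∫ c, (∫ m, Qb m c * ((p s (m s) c - r s (m s) c)
        * ((∏ u ∈ Finset.Iio s, p u (m u) c) * ∏ v ∈ Finset.Ioi s, r v (m v) c))
          ∂(Measure.pi μ)) ∂μC)
      = ∫ c, (∫ m, Qb m c * ((∏ u, p u (m u) c) - ∏ v, r v (m v) c) ∂(Measure.pi μ)) ∂μC := by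
  have key : ∀ a b : Fin t → ℝ, (∏ u, a u) - ∏ v, b v
      = ∑ s : Fin t, (a s - b s) * ((∏ u ∈ Finset.Iio s, a u) * ∏ v ∈ Finset.Ioi s, b v) := by
    intro a b
    have h := Finset.prod_add_ordered (Finset.univ : Finset (Fin t)) b (fun i => a i - b i)
    simp only [add_sub_cancel] at h
    rw [h, add_sub_cancel_left]
    refine Finset.sum_congr rfl fun s _ => ?_
    rw [mul_assoc]
    congr 3 <;> (ext j; simp)
  rw [← integral_prod _ hInt']
  have h1 : ∀ s : Fin t, _ := fun s => (integral_prod _ (hInt s)).symm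
  rw [Finset.sum_congr rfl fun s _ => h1 s, ← integral_finsetSum _ fun s _ => hInt s]
  refine integral_congr_ae (Filter.Eventually.of_forall fun x => ?_)
  simp only
  rw [← Finset.mul_sum, key (fun u => p u (x.2 u) x.1) (fun u => r u (x.2 u) x.1)]
end
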